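/- If C_{p^n} × C_{p^n} (p prime, n ≥ 2) contains a regular partial difference set D, then the nonabelian group C_{p^n} ⋊_{p^{n-1}+1} C_{p^n} contains a regular partial difference set with the same parameters as D. -/

import Mathlib

section Defs

variable {G : Type*} [Group G]

/-- Number of ways to write `g = d₁ * d₂⁻¹` with `d₁, d₂ ∈ D`. -/
noncomputable def diffCount (D : Set G) (g : G) : ℕ :=
  Nat.card {p : D × D // (p.1 : G) * (p.2 : G)⁻¹ = g}

def IsPDS (D : Set G) (v k l μ : ℕ) : Prop :=
  Nat.card G = v ∧ Nat.card D = k ∧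
    (∀ g ∈ D, g ≠ 1 → diffCount D g = l) ∧
    (∀ g : G, g ∉ D → g ≠ 1 → diffCount D g = μ)

end Defs

/-!
Every nontrivial character sum `χ(D)` of a regular partial difference set `D` in an abelian group is
a root of the same quadratic over `ℤ`. If `t` is prime to the order of the group and `t ≡ 1` modulo
a prime divisor `p` of it, the Galois automorphism `ζ ↦ ζ ^ t` fixes `χ(D)` for `χ` of order `p`,
hence fixes both roots, and Fourier inversion shows that `x ↦ x ^ t` preserves `D` (Ma's multiplier
theorem).

For `u = p ^ (n - 1) + 1` the bijection `(x, y) ↦ (x, 1 + u + ⋯ + u ^ (y - 1))` from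
`C_{p^n} ⋊_u C_{p^n}` to `C_{p^n} × C_{p^n}` is a crossed homomorphism for the action by powers of
`x ↦ x ^ u`. As this action preserves `D`, the bijection is an isomorphism of Cayley graphs, and the
preimage of `D` is a regular partial difference set. Bijectivity follows from lifting the exponent
and fails only for `p ^ n = 4`. There the values of `χ(D)` and their multiplicities leave only a
short list of possible parameters, each of which is realized explicitly in `C₄ ⋊₋₁ C₄`.
-/

/-- A *regular* partial difference set: one that omits the identity and is closed under inverses. -/
structure IsRegularPDS {G : Type*} [Group G] (D : Set G) (v k l μ : ℕ) : Prop where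
  isPDS : IsPDS D v k l μ
  one_notMem : (1 : G) ∉ D
  inv_eq : D⁻¹ = D

section Group

variable {G H : Type*} [Group G] [Group H] {D : Set G} {v k l μ : ℕ}

theorem diffCount_eq_ncard (D : Set G) (g : G) :
    diffCount D g = {x | x ∈ D ∧ g⁻¹ * x ∈ D}.ncard := by
  rw [diffCount, ← Nat.card_coe_set_eq]
  exact Nat.card_congr
    { toFun := fun q => ⟨q.1.1, q.1.1.2, by simp [← q.2]⟩
      invFun := fun x => ⟨(⟨x, x.2.1⟩, ⟨g⁻¹ * x, x.2.2⟩), by simp⟩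
      left_inv := by rintro ⟨⟨d, e⟩, rfl⟩; simp
      right_inv := fun _ => rfl }

theorem diffCount_one (D : Set G) : diffCount D 1 = D.ncard := by
  simp [diffCount_eq_ncard]

theorem diffCount_preimage (θ : H ≃ G)
    (hθ : ∀ g h, θ (g⁻¹ * h) ∈ D ↔ (θ g)⁻¹ * θ h ∈ D) (g : H) :
    diffCount (θ ⁻¹' D) g = diffCount D (θ g) := by
  rw [diffCount_eq_ncard, diffCount_eq_ncard, ← Set.ncard_image_of_injective _ θ.injective,
    θ.image_eq_preimage_symm]
  congr 1
  ext x
  simp [hθ]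

-- The hypotheses say that `θ` is an isomorphism of Cayley graphs.
theorem IsRegularPDS.preimage (hD : IsRegularPDS D v k l μ) (θ : H ≃ G) (hθ_one : θ 1 = 1)
    (hθ : ∀ g h, θ (g⁻¹ * h) ∈ D ↔ (θ g)⁻¹ * θ h ∈ D) :
    IsRegularPDS (θ ⁻¹' D) v k l μ := by
  obtain ⟨⟨hv, hk, hl, hμ⟩, hone, hinv⟩ := hD
  have θ_ne_one {g : H} (hg : g ≠ 1) : θ g ≠ 1 := hθ_one ▸ θ.injective.ne hg
  refine ⟨⟨(Nat.card_congr θ).trans hv, (Nat.card_congr (θ.subtypeEquiv fun _ => Iff.rfl)).trans hk,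
    fun g hg hg1 => ?_, fun g hg hg1 => ?_⟩, by simpa [hθ_one] using hone, ?_⟩
  · rw [diffCount_preimage θ hθ, hl _ hg (θ_ne_one hg1)]
  · rw [diffCount_preimage θ hθ, hμ _ hg (θ_ne_one hg1)]
  · ext g
    have := hθ g 1
    rw [mul_one, hθ_one, mul_one, ← Set.mem_inv, hinv] at this
    simpa using this

theorem IsRegularPDS.preimage_mulEquiv (hD : IsRegularPDS D v k l μ) (e : H ≃* G) :
    IsRegularPDS (e ⁻¹' D) v k l μ :=
  hD.preimage e.toEquiv (map_one e) fun g h => by simp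

theorem IsRegularPDS.preimage_crossedHom (hD : IsRegularPDS D v k l μ) (θ : H ≃ G)
    (α : H → G →* G) (hα : ∀ h x, α h x ∈ D ↔ x ∈ D) (hθ : ∀ g h, θ (g * h) = θ g * α g (θ h)) :
    IsRegularPDS (θ ⁻¹' D) v k l μ := by
  have hθ_one : θ 1 = 1 := by
    obtain ⟨h, hh⟩ := θ.surjective 1
    simpa [hh] using (hθ 1 h).symm
  refine hD.preimage θ hθ_one fun g h => ?_
  have hquot : θ h = θ g * α g (θ (g⁻¹ * h)) := by rw [← hθ, mul_inv_cancel_left]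
  rw [hquot, inv_mul_cancel_left, hα]

theorem diffCount_coe_finset [DecidableEq G] (S : Finset G) (g : G) :
    diffCount (S : Set G) g = {x ∈ S | g⁻¹ * x ∈ S}.card := by
  rw [diffCount_eq_ncard, ← Set.ncard_coe_finset, Finset.coe_filter]
  rfl

theorem isRegularPDS_coe_finset [DecidableEq G] {S : Finset G} (hv : Nat.card G = v)
    (hk : S.card = k) (hl : ∀ g ∈ S, {x ∈ S | g⁻¹ * x ∈ S}.card = l)
    (hμ : ∀ g, g ∉ S → g ≠ 1 → {x ∈ S | g⁻¹ * x ∈ S}.card = μ)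
    (hone : 1 ∉ S) (hinv : ∀ g ∈ S, g⁻¹ ∈ S) : IsRegularPDS (S : Set G) v k l μ := by
  refine ⟨⟨hv, by simpa using hk, fun g hg _ => ?_, fun g hg hg1 => ?_⟩, hone, ?_⟩
  · rw [diffCount_coe_finset, hl g hg]
  · rw [diffCount_coe_finset, hμ g hg hg1]
  · ext g
    exact ⟨fun hg => inv_inv g ▸ hinv _ hg, hinv g⟩

theorem isRegularPDS_empty (G : Type*) [Group G] (l : ℕ) :
    IsRegularPDS (∅ : Set G) (Nat.card G) 0 l 0 :=
  ⟨⟨rfl, by simp, by simp, by simp [diffCount_eq_ncard]⟩, by simp, by simp⟩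

theorem isRegularPDS_compl_one (G : Type*) [Group G] [Finite G] (μ : ℕ) :
    IsRegularPDS ({1}ᶜ : Set G) (Nat.card G) (Nat.card G - 1) (Nat.card G - 2) μ := by
  refine ⟨⟨rfl, ?_, fun g _ hg => ?_, fun g hg hg1 => (hg hg1).elim⟩, by simp, by simp⟩
  · rw [Nat.card_coe_set_eq, Set.ncard_compl, Set.ncard_singleton]
  · have hset : {x : G | x ∈ ({1}ᶜ : Set G) ∧ g⁻¹ * x ∈ ({1}ᶜ : Set G)} = {1, g}ᶜ := by
      ext x
      simp [inv_mul_eq_one, eq_comm]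
    rw [diffCount_eq_ncard, hset, Set.ncard_compl, Set.ncard_pair hg.symm]

open Classical in
theorem IsRegularPDS.diffCount_eq {K : Type*} [CommRing K] (hD : IsRegularPDS D v k l μ) (g : G) :
    (diffCount D g : K) =
      ((l : K) - μ) * (if g ∈ D then 1 else 0) + ((k : K) - μ) * (if g = 1 then 1 else 0) + μ := by
  obtain ⟨⟨-, hk, hl, hμ⟩, hone, -⟩ := hD
  by_cases hg1 : g = 1
  · simp [hg1, hone, diffCount_one, ← hk]
  · by_cases hg : g ∈ D
    · simp [hg, hg1, hl g hg hg1]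
    · simp [hg, hg1, hμ g hg hg1]

end Group

section CharSum

variable {G K : Type*} [CommGroup G] [Fintype G] [Field K] {D : Set G} {v k l μ : ℕ}

open Classical in
/-- The character sum `χ(D) = ∑ d ∈ D, χ d`, i.e. the Fourier transform of the indicator function
of `D` at `χ`. -/
noncomputable def charSum (D : Set G) (χ : G →* Kˣ) : K :=
  ∑ d : D, (χ d : K)

open Classical in
theorem charSum_eq_sum_ite (D : Set G) (χ : G →* Kˣ) :
    charSum D χ = ∑ g, (if g ∈ D then 1 else 0) * (χ g : K) := by
  simp only [ite_mul, one_mul, zero_mul, ← Finset.sum_filter]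
  exact (Finset.sum_subtype _ (by simp) fun g => (χ g : K)).symm

theorem charSum_one (D : Set G) : charSum D (1 : G →* Kˣ) = Nat.card D := by
  classical
  simp [charSum]

theorem charSum_inv (hD : D⁻¹ = D) (χ : G →* Kˣ) : charSum D χ⁻¹ = charSum D χ := by
  classical
  exact Fintype.sum_equiv ((Equiv.inv G).subtypeEquiv fun g => by
    rw [Equiv.inv_apply, ← Set.mem_inv, hD]) _ _
    fun d => by simp

theorem charSum_mul_charSum_inv (D : Set G) (χ : G →* Kˣ) :
    charSum D χ * charSum D χ⁻¹ = ∑ g, (diffCount D g : K) * χ g := by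
  classical
  calc charSum D χ * charSum D χ⁻¹
      = ∑ q : D × D, ((χ (q.1 * (q.2 : G)⁻¹) : Kˣ) : K) := by
        simp [charSum, Finset.sum_mul_sum, Fintype.sum_prod_type]
    _ = ∑ g, ∑ _q : {q : D × D // (q.1 : G) * (q.2 : G)⁻¹ = g}, (χ g : K) := by
        rw [← Fintype.sum_fiberwise fun q : D × D => (q.1 : G) * (q.2 : G)⁻¹]
        exact Finset.sum_congr rfl fun g _ => Finset.sum_congr rfl fun q _ => by rw [q.2]
    _ = ∑ g, (diffCount D g : K) * χ g := by
        simp [diffCount]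

theorem IsRegularPDS.charSum_sq (hD : IsRegularPDS D v k l μ) (χ : G →* Kˣ) :
    charSum D χ ^ 2 = (l - μ) * charSum D χ + (k - μ) + μ * ∑ g, (χ g : K) := by
  classical
  calc charSum D χ ^ 2 = ∑ g, (diffCount D g : K) * χ g := by
        rw [← charSum_mul_charSum_inv, charSum_inv hD.inv_eq, sq]
    _ = _ := by
        simp only [hD.diffCount_eq, charSum_eq_sum_ite, add_mul, mul_assoc, Finset.sum_add_distrib,
          ← Finset.mul_sum]
        simp

theorem sum_monoidHom_units_eq_zero {χ : G →* Kˣ} (hχ : χ ≠ 1) : ∑ g, (χ g : K) = 0 := by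
  refine sum_hom_units_eq_zero ((Units.coeHom K).comp χ) fun h => hχ ?_
  ext g
  exact DFunLike.congr_fun h g

theorem IsRegularPDS.charSum_sq_of_ne_one (hD : IsRegularPDS D v k l μ) {χ : G →* Kˣ}
    (hχ : χ ≠ 1) : charSum D χ ^ 2 = (l - μ) * charSum D χ + (k - μ) := by
  rw [hD.charSum_sq, sum_monoidHom_units_eq_zero hχ, mul_zero, add_zero]

theorem IsRegularPDS.sq_card_eq {G : Type*} [CommGroup G] [Finite G] {D : Set G}
    (hD : IsRegularPDS D v k l μ) : (k : ℤ) ^ 2 = (l - μ) * k + (k - μ) + μ * v := by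
  have := Fintype.ofFinite G
  have h := hD.charSum_sq (1 : G →* ℚˣ)
  rw [charSum_one, hD.isPDS.2.1] at h
  simp only [MonoidHom.one_apply, Units.val_one, Finset.sum_const, Finset.card_univ, nsmul_one,
    Fintype.card_eq_nat_card, hD.isPDS.1] at h
  exact_mod_cast h

section Duality

open Classical in
theorem sum_apply_monoidHom_units {G : Type*} [CommGroup G] [Finite G]
    [HasEnoughRootsOfUnity K (Monoid.exponent G)] [Fintype (G →* Kˣ)] (g : G) :
    ∑ χ : G →* Kˣ, (χ g : K) = if g = 1 then (Nat.card G : K) else 0 := by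
  split_ifs with hg
  · rw [← CommGroup.card_monoidHom_of_hasEnoughRootsOfUnity G K, Nat.card_eq_fintype_card]
    simp [hg]
  · obtain ⟨χ, hχ⟩ := CommGroup.exists_apply_ne_one_of_hasEnoughRootsOfUnity G K hg
    exact sum_hom_units_eq_zero ((Units.coeHom K).comp (MonoidHom.eval g)) fun h =>
      hχ (Units.ext (DFunLike.congr_fun h χ))

variable [HasEnoughRootsOfUnity K (Monoid.exponent G)] [Fintype (G →* Kˣ)]

open Classical in
theorem sum_charSum_mul_inv (D : Set G) (x : G) :
    ∑ χ : G →* Kˣ, charSum D χ * (χ x⁻¹ : K) = if x ∈ D then (Nat.card G : K) else 0 := by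
  calc ∑ χ : G →* Kˣ, charSum D χ * (χ x⁻¹ : K)
      = ∑ g, (if g ∈ D then 1 else 0) * ∑ χ : G →* Kˣ, (χ (g * x⁻¹) : K) := by
        simp only [charSum_eq_sum_ite, Finset.sum_mul, Finset.mul_sum, map_mul, Units.val_mul,
          mul_assoc]
        exact Finset.sum_comm
    _ = _ := by
        simp only [sum_apply_monoidHom_units, mul_inv_eq_one]
        simp

end Duality

end CharSum

section Multiplier

theorem pow_eq_self_of_modEq_one {M : Type*} [Monoid M] {x : M} {t : ℕ}
    (ht : t ≡ 1 [MOD orderOf x]) : x ^ t = x := by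
  rw [← pow_mod_orderOf, ht, pow_mod_orderOf, pow_one]

theorem exists_algEquiv_pow_of_isCyclotomicExtension {m t : ℕ} [NeZero m] (K : Type*) [Field K]
    [Algebra ℚ K] [IsCyclotomicExtension {m} ℚ K] (ht : t.Coprime m) :
    ∃ σ : K ≃ₐ[ℚ] K, ∀ z : K, z ^ m = 1 → σ z = z ^ t := by
  have hζ := IsCyclotomicExtension.zeta_spec m ℚ K
  have hirr := Polynomial.cyclotomic.irreducible_rat (NeZero.pos m)
  refine ⟨IsCyclotomicExtension.fromZetaAut (hζ.pow_of_coprime t ht) hirr, fun z hz => ?_⟩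
  obtain ⟨i, -, rfl⟩ := hζ.eq_pow_of_pow_eq_one hz
  rw [map_pow, IsCyclotomicExtension.fromZetaAut_spec, pow_right_comm]

theorem hasEnoughRootsOfUnity_of_isCyclotomicExtension (m : ℕ) [NeZero m] (A K : Type*)
    [CommRing A] [CommRing K] [IsDomain K] [Algebra A K] [IsCyclotomicExtension {m} A K] :
    HasEnoughRootsOfUnity K m where
  prim := ⟨_, IsCyclotomicExtension.zeta_spec m A K⟩
  cyc := rootsOfUnity.isCyclic K m

theorem exists_orderOf_monoidHom_units_eq {G K : Type*} [CommGroup G] [Finite G] [Field K]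
    [HasEnoughRootsOfUnity K (Monoid.exponent G)] {p : ℕ} (hp : p.Prime) (hpG : p ∣ Nat.card G) :
    ∃ χ : G →* Kˣ, orderOf χ = p := by
  have := Fact.mk hp
  exact exists_prime_orderOf_dvd_card' p
    (by rwa [CommGroup.card_monoidHom_of_hasEnoughRootsOfUnity G K])

variable {G K : Type*} [CommGroup G] [Fintype G] [Field K] {D : Set G} {v k l μ p t : ℕ}

theorem map_charSum_eq_charSum_pow (D : Set G) (σ : K →+* K)
    (hσ : ∀ z : K, z ^ Monoid.exponent G = 1 → σ z = z ^ t) (χ : G →* Kˣ) :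
    σ (charSum D χ) = charSum D (χ ^ t) := by
  simp only [charSum, map_sum, MonoidHom.pow_apply, Units.val_pow_eq_pow_val]
  refine Finset.sum_congr rfl fun d _ => hσ _ ?_
  rw [← Units.val_pow_eq_pow_val, ← map_pow, Monoid.pow_exponent_eq_one, map_one, Units.val_one]

-- Both roots of the quadratic satisfied by all nontrivial `χ(D)` are fixed by `σ` once one is.
theorem IsRegularPDS.map_charSum_eq (hD : IsRegularPDS D v k l μ) (σ : K →+* K)
    {χ₀ : G →* Kˣ} (hχ₀ : χ₀ ≠ 1) (hσ : σ (charSum D χ₀) = charSum D χ₀) (χ : G →* Kˣ) :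
    σ (charSum D χ) = charSum D χ := by
  obtain rfl | hχ := eq_or_ne χ 1
  · rw [charSum_one, map_natCast]
  have hroot : (charSum D χ - charSum D χ₀) * (charSum D χ + charSum D χ₀ - (l - μ)) = 0 := by
    linear_combination hD.charSum_sq_of_ne_one hχ - hD.charSum_sq_of_ne_one hχ₀
  obtain heq | heq := mul_eq_zero.mp hroot
  · rw [sub_eq_zero.mp heq, hσ]
  · have hsum : charSum D χ = l - μ - charSum D χ₀ := by linear_combination heq
    simp [hsum, hσ]

theorem IsRegularPDS.charSum_pow (hD : IsRegularPDS D v k l μ) [Algebra ℚ K]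
    [IsCyclotomicExtension {Monoid.exponent G} ℚ K] (ht : t.Coprime (Nat.card G)) (hp : p.Prime)
    (hpG : p ∣ Nat.card G) (htp : t ≡ 1 [MOD p]) (χ : G →* Kˣ) :
    charSum D (χ ^ t) = charSum D χ := by
  have := hasEnoughRootsOfUnity_of_isCyclotomicExtension (Monoid.exponent G) ℚ K
  obtain ⟨σ, hσ⟩ := exists_algEquiv_pow_of_isCyclotomicExtension K
    (ht.coprime_dvd_right Group.exponent_dvd_nat_card)
  obtain ⟨χ₀, hχ₀⟩ := exists_orderOf_monoidHom_units_eq (K := K) hp hpG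
  have hχ₀_ne : χ₀ ≠ 1 := by
    rintro rfl
    exact hp.one_lt.ne (orderOf_one.symm.trans hχ₀)
  have hχ₀_pow : χ₀ ^ t = χ₀ := pow_eq_self_of_modEq_one (hχ₀.symm ▸ htp)
  have hfix := map_charSum_eq_charSum_pow D (σ : K →+* K) hσ χ₀
  rw [hχ₀_pow] at hfix
  rw [← map_charSum_eq_charSum_pow D (σ : K →+* K) hσ, hD.map_charSum_eq _ hχ₀_ne hfix]

theorem IsRegularPDS.pow_mem_iff {G : Type*} [CommGroup G] [Finite G] {D : Set G}
    (hD : IsRegularPDS D v k l μ) (ht : t.Coprime (Nat.card G)) (hp : p.Prime)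
    (hpG : p ∣ Nat.card G) (htp : t ≡ 1 [MOD p]) (x : G) : x ^ t ∈ D ↔ x ∈ D := by
  classical
  have := Fintype.ofFinite G
  let K := CyclotomicField (Monoid.exponent G) ℚ
  have : IsCyclotomicExtension {Monoid.exponent G} ℚ K :=
    CyclotomicField.isCyclotomicExtension _ _
  have := hasEnoughRootsOfUnity_of_isCyclotomicExtension (Monoid.exponent G) ℚ K
  have := Fintype.ofFinite (G →* Kˣ)
  have hdual : (Nat.card (G →* Kˣ)).Coprime t := by
    rw [CommGroup.card_monoidHom_of_hasEnoughRootsOfUnity G K]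
    exact ht.symm
  have hinversion : ∑ χ : G →* Kˣ, charSum D χ * (χ (x ^ t)⁻¹ : K) =
      ∑ χ : G →* Kˣ, charSum D χ * (χ x⁻¹ : K) :=
    Fintype.sum_equiv (powCoprime hdual) _ _ fun χ => by
      rw [powCoprime_apply, hD.charSum_pow ht hp hpG htp, ← inv_pow, map_pow, MonoidHom.pow_apply]
  have hcard : (Nat.card G : K) ≠ 0 := Nat.cast_ne_zero.mpr Nat.card_pos.ne'
  rw [sum_charSum_mul_inv, sum_charSum_mul_inv] at hinversion
  by_cases hxt : x ^ t ∈ D <;> by_cases hx : x ∈ D <;> simp_all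

theorem IsRegularPDS.pow_mem_iff_of_card_eq_prime_pow {G : Type*} [CommGroup G] [Finite G]
    {D : Set G} {m : ℕ} (hD : IsRegularPDS D v k l μ) (hp : p.Prime) (hm : m ≠ 0)
    (hG : Nat.card G = p ^ m) (ht : t ≡ 1 [MOD p]) (x : G) : x ^ t ∈ D ↔ x ∈ D := by
  have hcoprime : t.Coprime p := by rw [Nat.Coprime, ht.gcd_eq, Nat.gcd_one_left]
  exact hD.pow_mem_iff (hG ▸ hcoprime.pow_right m) hp (hG ▸ dvd_pow_self p hm) ht x

end Multiplier

section Discriminant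

theorem exists_sum_eq_sub_mul {ι R : Type*} [CommRing R] [NoZeroDivisors R] (s : Finset ι)
    {f : ι → R} {w : R} (hf : ∀ i ∈ s, f i ^ 2 = w ^ 2) :
    ∃ a b : ℕ, a + b = s.card ∧ ∑ i ∈ s, f i = (a - b) * w := by
  classical
  induction s using Finset.induction_on with
  | empty => exact ⟨0, 0, by simp⟩
  | insert i s his ih =>
    obtain ⟨a, b, hcard, hsum⟩ := ih fun j hj => hf j (Finset.mem_insert_of_mem hj)
    rw [Finset.sum_insert his, Finset.card_insert_of_notMem his, hsum]
    obtain hi | hi := sq_eq_sq_iff_eq_or_eq_neg.mp (hf i (Finset.mem_insert_self i s))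
    · exact ⟨a + 1, b, by lia, by rw [hi]; push_cast; ring⟩
    · exact ⟨a, b + 1, by lia, by rw [hi]; push_cast; ring⟩

variable {G K : Type*} [CommGroup G] [Fintype G] [Field K] {D : Set G} {v k l μ : ℕ}

theorem IsRegularPDS.two_mul_charSum_sub_sq (hD : IsRegularPDS D v k l μ) {χ : G →* Kˣ}
    (hχ : χ ≠ 1) : (2 * charSum D χ - (l - μ)) ^ 2 = ((l : K) - μ) ^ 2 + 4 * (k - μ) := by
  linear_combination 4 * hD.charSum_sq_of_ne_one hχ

variable [HasEnoughRootsOfUnity K (Monoid.exponent G)] [Fintype (G →* Kˣ)]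

theorem sum_charSum_of_one_notMem (hD : 1 ∉ D) : ∑ χ : G →* Kˣ, charSum D χ = 0 := by
  simpa [hD] using sum_charSum_mul_inv (K := K) D 1

open Classical in
theorem IsRegularPDS.sum_two_mul_charSum_sub (hD : IsRegularPDS D v k l μ) :
    ∑ χ ∈ Finset.univ.erase (1 : G →* Kˣ), (2 * charSum D χ - (l - μ)) =
      -(2 * k + (v - 1) * (l - μ)) := by
  have hcard : (Fintype.card (G →* Kˣ) : K) = v := by
    rw [Fintype.card_eq_nat_card, CommGroup.card_monoidHom_of_hasEnoughRootsOfUnity, hD.isPDS.1]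
  have htotal : ∑ χ : G →* Kˣ, (2 * charSum D χ - ((l : K) - μ)) = -(v * (l - μ)) := by
    rw [Finset.sum_sub_distrib, ← Finset.mul_sum, sum_charSum_of_one_notMem hD.one_notMem,
      Finset.sum_const, Finset.card_univ, nsmul_eq_mul, hcard]
    ring
  rw [Finset.sum_erase_eq_sub (Finset.mem_univ 1), htotal, charSum_one, hD.isPDS.2.1]
  ring

-- `a` and `b` are the multiplicities of the two values of `χ(D)` on nontrivial characters `χ`.
theorem IsRegularPDS.exists_sq_mul_discr_eq {G : Type*} [CommGroup G] [Finite G] {D : Set G}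
    (hD : IsRegularPDS D v k l μ) :
    ∃ a b : ℕ, a + b = v - 1 ∧
      ((a : ℤ) - b) ^ 2 * ((l - μ) ^ 2 + 4 * (k - μ)) = (2 * k + (v - 1) * (l - μ)) ^ 2 := by
  classical
  have := Fintype.ofFinite G
  have := Fintype.ofFinite (G →* ℂˣ)
  obtain ⟨w, hw⟩ := IsAlgClosed.exists_pow_nat_eq (((l : ℂ) - μ) ^ 2 + 4 * (k - μ)) two_pos
  obtain ⟨a, b, hab, hsum⟩ := exists_sum_eq_sub_mul (Finset.univ.erase (1 : G →* ℂˣ))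
    (f := fun χ => 2 * charSum D χ - (l - μ)) (w := w) fun χ hχ => by
      rw [hD.two_mul_charSum_sub_sq (Finset.ne_of_mem_erase hχ), hw]
  refine ⟨a, b, ?_, ?_⟩
  · rw [hab, Finset.card_erase_of_mem (Finset.mem_univ 1), Finset.card_univ,
      Fintype.card_eq_nat_card, CommGroup.card_monoidHom_of_hasEnoughRootsOfUnity, hD.isPDS.1]
  · rw [hD.sum_two_mul_charSum_sub] at hsum
    have hsq : ((a : ℂ) - b) ^ 2 * ((l - μ) ^ 2 + 4 * (k - μ)) =
        (2 * k + (v - 1) * (l - μ)) ^ 2 := by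
      rw [← hw, ← mul_pow, ← hsum, neg_sq]
    exact_mod_cast hsq

end Discriminant

section OrderSixteen

variable {G : Type*} [Group G] [Finite G] {D : Set G} {v k l μ : ℕ}

theorem IsRegularPDS.card_lt (hD : IsRegularPDS D v k l μ) : k < v := by
  rw [← hD.isPDS.1, ← hD.isPDS.2.1, Nat.card_coe_set_eq, ← Set.ncard_univ]
  exact Set.ncard_lt_ncard (Set.ssubset_univ_iff.mpr fun h => hD.one_notMem (h ▸ Set.mem_univ 1))

theorem diffCount_le_card (D : Set G) (g : G) : diffCount D g ≤ Nat.card D := by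
  rw [diffCount_eq_ncard, Nat.card_coe_set_eq]
  exact Set.ncard_le_ncard fun x hx => hx.1

theorem IsRegularPDS.mu_le_card (hD : IsRegularPDS D v k l μ) (hk : k + 1 < v) : μ ≤ k := by
  obtain ⟨hv, hk', -, hμ⟩ := hD.isPDS
  obtain ⟨g, hg⟩ : ∃ g, g ∉ insert 1 D := by
    by_contra! h
    have hle := Set.ncard_insert_le 1 D
    rw [Set.eq_univ_of_forall h, Set.ncard_univ, hv, ← Nat.card_coe_set_eq, hk'] at hle
    lia
  rw [Set.mem_insert_iff, not_or] at hg
  exact hμ g hg.2 hg.1 ▸ hk' ▸ diffCount_le_card D g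

/-- The triples `(k, l, μ)` with `0 < k < 15` that satisfy the counting and discriminant conditions
for a regular partial difference set in an abelian group of order `16`. -/
def pdsParametersSixteen : List (ℕ × ℕ × ℕ) :=
  [(1, 0, 0), (3, 2, 0), (5, 0, 2), (6, 2, 2), (7, 6, 0), (8, 0, 8), (9, 4, 6), (10, 6, 6),
    (12, 8, 12), (14, 12, 14)]

theorem mem_pdsParametersSixteen_of_bounded :
    ∀ k ∈ Finset.Ioo 0 15, ∀ l ∈ Finset.range k, ∀ μ ∈ Finset.range (k + 1),
    l * k + μ * (15 - k) = k * (k - 1) →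
    (∃ a ∈ Finset.range 16,
      (2 * (a : ℤ) - 15) ^ 2 * ((l - μ) ^ 2 + 4 * (k - μ)) = (2 * k + 15 * (l - μ)) ^ 2) →
    (k, l, μ) ∈ pdsParametersSixteen := by
  decide +kernel

theorem IsRegularPDS.mem_pdsParametersSixteen {G : Type*} [CommGroup G] [Finite G] {D : Set G}
    (hD : IsRegularPDS D 16 k l μ) :
    k = 0 ∧ μ = 0 ∨ k = 15 ∧ l = 14 ∨ (k, l, μ) ∈ pdsParametersSixteen := by
  have hk : k < 16 := hD.card_lt
  have hcount : (l : ℤ) * k + μ * (15 - k) = k * (k - 1) := by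
    linear_combination -hD.sq_card_eq
  obtain ⟨a, b, hab, hdiscr⟩ := hD.exists_sq_mul_discr_eq
  have hb : (b : ℤ) = 15 - a := by lia
  obtain rfl | hk0 := k.eq_zero_or_pos
  · left; simpa using hcount
  obtain rfl | hk15 := (Nat.lt_succ_iff.mp hk).eq_or_lt
  · right; left; push_cast at hcount; lia
  refine .inr <| .inr <| mem_pdsParametersSixteen_of_bounded k
    (Finset.mem_Ioo.mpr ⟨hk0, hk15⟩) l (Finset.mem_range.mpr ?_) μ (Finset.mem_range.mpr ?_) ?_
    ⟨a, Finset.mem_range.mpr (by lia), ?_⟩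
  · nlinarith
  · exact Nat.lt_succ_of_le (hD.mu_le_card (by lia))
  · zify [hk15.le, Nat.one_le_iff_ne_zero.mpr hk0.ne']; exact hcount
  · rw [hb] at hdiscr; push_cast at hdiscr; linear_combination hdiscr

end OrderSixteen

section CyclicTwist

theorem semidirectProduct_lift_injective {A B H : Type*} [Group A] [Group B] [Group H]
    {φ : B →* MulAut A} {f : A →* H} {g : B →* H}
    (h : ∀ b, f.comp (φ b).toMonoidHom = (MulAut.conj (g b)).toMonoidHom.comp f)
    (hf : Function.Injective f) (hg : Function.Injective g) (hfg : Disjoint f.range g.range) :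
    Function.Injective (SemidirectProduct.lift f g h) := by
  rw [injective_iff_map_eq_one]
  rintro ⟨x, y⟩ hxy
  rw [SemidirectProduct.mk_eq_inl_mul_inr, map_mul, SemidirectProduct.lift_inl,
    SemidirectProduct.lift_inr] at hxy
  obtain ⟨hx, hy⟩ := (Subgroup.disjoint_iff_mul_eq_one.mp hfg) ⟨x, rfl⟩ ⟨y, rfl⟩ hxy
  rw [(map_eq_one_iff f hf).mp hx, (map_eq_one_iff g hg).mp hy]
  rfl

variable {H : Type*} [Group H] {a c : H} {N s : ℕ}

theorem semiconjBy_pow_pow {M : Type*} [Monoid M] {a c : M} (hconj : SemiconjBy c a (a ^ s))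
    (m i : ℕ) : SemiconjBy (c ^ m) (a ^ i) (a ^ (s ^ m * i)) := by
  induction m generalizing i with
  | zero => simp
  | succ m ih =>
    have hstep : SemiconjBy c (a ^ i) (a ^ (s * i)) := pow_mul a s i ▸ hconj.pow_right i
    rw [pow_succ, pow_succ, mul_assoc]
    exact (ih (s * i)).mul_left hstep

theorem natCast_pow_eq_one_of_semiconjBy (ha : orderOf a = N) (hc : c ^ N = 1)
    (hconj : SemiconjBy c a (a ^ s)) : (s : ZMod N) ^ N = 1 := by
  have hpow : a ^ 1 = a ^ (s ^ N * 1) := by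
    simpa only [hc, SemiconjBy, one_mul, mul_one] using semiconjBy_pow_pow hconj N 1
  rw [mul_one, pow_eq_pow_iff_modEq, ha, ← ZMod.natCast_eq_natCast_iff] at hpow
  exact_mod_cast hpow.symm

variable [NeZero N]

/-- The homomorphism from the cyclic group of order `N` that sends the generator to `x`. -/
def zmodPowersHom {M : Type*} [Monoid M] (x : M) (hx : x ^ N = 1) :
    Multiplicative (ZMod N) →* M where
  toFun y := x ^ y.toAdd.val
  map_one' := by simp
  map_mul' y z := by rw [toAdd_mul, ZMod.val_add, ← pow_add, ← pow_eq_pow_mod _ hx]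

theorem zmodPowersHom_natCast {M : Type*} [Monoid M] (x : M) (hx : x ^ N = 1) (m : ℕ) :
    zmodPowersHom x hx (.ofAdd (m : ZMod N)) = x ^ m := by
  rw [pow_eq_pow_mod m hx, ← ZMod.val_natCast]
  rfl

theorem zmodPowersHom_injective {M : Type*} [Monoid M] {x : M} (hx : orderOf x = N) :
    Function.Injective (zmodPowersHom x (hx ▸ pow_orderOf_eq_one x)) := fun y z hyz =>
  Multiplicative.toAdd.injective <| ZMod.val_injective N <|
    pow_injOn_Iio_orderOf (hx ▸ ZMod.val_lt y.toAdd) (hx ▸ ZMod.val_lt z.toAdd) hyz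

theorem range_zmodPowersHom_le {M : Type*} [Group M] {x : M} (hx : x ^ N = 1) :
    (zmodPowersHom x hx).range ≤ Subgroup.zpowers x := by
  rintro _ ⟨y, rfl⟩
  exact Subgroup.npow_mem_zpowers x _

theorem exists_eq_ofAdd_natCast (y : Multiplicative (ZMod N)) :
    ∃ m : ℕ, y = .ofAdd (m : ZMod N) :=
  ⟨y.toAdd.val, by rw [ZMod.natCast_zmod_val, ofAdd_toAdd]⟩

/-- The action of the cyclic group of order `N` on itself in which the generator acts as the
power map by the unit `u`. -/
def cyclicTwist (u : (ZMod N)ˣ) (hu : u ^ N = 1) :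
    Multiplicative (ZMod N) →* MulAut (Multiplicative (ZMod N)) :=
  ((MulAutMultiplicative (ZMod N)).symm.toMonoidHom.comp AddAut.mulLeft).comp (zmodPowersHom u hu)

/-- The group `C_N ⋊_u C_N`. -/
abbrev CyclicSemidirect (u : (ZMod N)ˣ) (hu : u ^ N = 1) : Type :=
  Multiplicative (ZMod N) ⋊[cyclicTwist u hu] Multiplicative (ZMod N)

theorem cyclicTwist_apply (u : (ZMod N)ˣ) (hu : u ^ N = 1) (y x : Multiplicative (ZMod N)) :
    cyclicTwist u hu y x = .ofAdd ((u : ZMod N) ^ y.toAdd.val * x.toAdd) := by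
  rw [← Units.val_pow_eq_pow_val]
  rfl

theorem cyclicTwist_natCast {u : (ZMod N)ˣ} (hus : (u : ZMod N) = s) {hu : u ^ N = 1} (m i : ℕ) :
    cyclicTwist u hu (.ofAdd (m : ZMod N)) (.ofAdd (i : ZMod N)) =
      .ofAdd ((s ^ m * i : ℕ) : ZMod N) := by
  rw [cyclicTwist_apply, ← Units.val_pow_eq_pow_val, toAdd_ofAdd, ZMod.val_natCast,
    ← pow_eq_pow_mod m hu]
  push_cast [hus]
  rfl

theorem nonempty_mulEquiv_cyclicSemidirect (ha : orderOf a = N) (hc : orderOf c = N)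
    (hcompl : IsCompl (Subgroup.zpowers a) (Subgroup.zpowers c))
    (hconj : SemiconjBy c a (a ^ s)) {u : (ZMod N)ˣ} (hus : (u : ZMod N) = s) (hu : u ^ N = 1) :
    Nonempty (H ≃* CyclicSemidirect u hu) := by
  have ha_pow : a ^ N = 1 := ha ▸ pow_orderOf_eq_one a
  have hc_pow : c ^ N = 1 := hc ▸ pow_orderOf_eq_one c
  let f : CyclicSemidirect u hu →* H :=
    SemidirectProduct.lift (zmodPowersHom a ha_pow) (zmodPowersHom c hc_pow) fun y => by
      refine MonoidHom.ext fun x => ?_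
      obtain ⟨m, rfl⟩ := exists_eq_ofAdd_natCast y
      obtain ⟨i, rfl⟩ := exists_eq_ofAdd_natCast x
      simp only [MonoidHom.comp_apply, MulEquiv.coe_toMonoidHom, MulAut.conj_apply,
        cyclicTwist_natCast hus, zmodPowersHom_natCast, (semiconjBy_pow_pow hconj m i).eq,
        mul_inv_cancel_right]
  have f_inl : f (.inl (.ofAdd ((1 : ℕ) : ZMod N))) = a := by
    rw [SemidirectProduct.lift_inl, zmodPowersHom_natCast, pow_one]
  have f_inr : f (.inr (.ofAdd ((1 : ℕ) : ZMod N))) = c := by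
    rw [SemidirectProduct.lift_inr, zmodPowersHom_natCast, pow_one]
  have hsurj : Function.Surjective f := by
    rw [← MonoidHom.range_eq_top, eq_top_iff, ← hcompl.sup_eq_top, sup_le_iff,
      Subgroup.zpowers_le, Subgroup.zpowers_le]
    exact ⟨⟨_, f_inl⟩, ⟨_, f_inr⟩⟩
  have hinj : Function.Injective f :=
    semidirectProduct_lift_injective _ (zmodPowersHom_injective ha) (zmodPowersHom_injective hc) <|
      hcompl.disjoint.mono (range_zmodPowersHom_le ha_pow) (range_zmodPowersHom_le hc_pow)
  exact ⟨(MulEquiv.ofBijective f ⟨hinj, hsurj⟩).symm⟩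

end CyclicTwist

section GeomSum

variable {p n s N : ℕ}

theorem emultiplicity_pow_sub_one_of_modEq_one (hp : p.Prime) (hs : s ≡ 1 [MOD p])
    (hs4 : p = 2 → s ≡ 1 [MOD 4]) (m : ℕ) :
    emultiplicity (p : ℤ) ((s : ℤ) ^ m - 1) =
      emultiplicity (p : ℤ) (s - 1) + emultiplicity p m := by
  have hdvd : (p : ℤ) ∣ s - 1 := by simpa using hs.symm.dvd
  have hndvd : ¬ (p : ℤ) ∣ s := by
    rw [Int.natCast_dvd_natCast, hs.dvd_iff dvd_rfl]
    exact hp.not_dvd_one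
  obtain rfl | hp2 := eq_or_ne p 2
  · have h4 : (4 : ℤ) ∣ s - 1 := by simpa using (hs4 rfl).symm.dvd
    simpa [← Int.natCast_emultiplicity] using Int.two_pow_sub_pow' m h4 hndvd
  · simpa using Int.emultiplicity_pow_sub_pow hp (hp.odd_of_ne_two hp2) hdvd hndvd m

theorem pow_dvd_geom_sum_iff (hp : p.Prime) (hs : s ≡ 1 [MOD p])
    (hs4 : p = 2 → s ≡ 1 [MOD 4]) (m : ℕ) :
    p ^ n ∣ ∑ i ∈ Finset.range m, s ^ i ↔ p ^ n ∣ m := by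
  obtain rfl | hs1 := eq_or_ne s 1
  · simp
  have hfin : FiniteMultiplicity (p : ℤ) ((s : ℤ) - 1) :=
    Int.finiteMultiplicity_iff.mpr ⟨by simpa using hp.ne_one, by lia⟩
  have hgeom : emultiplicity p (∑ i ∈ Finset.range m, s ^ i) = emultiplicity p m := by
    have h := emultiplicity_pow_sub_one_of_modEq_one hp hs hs4 m
    rw [← geom_sum_mul, emultiplicity_mul (Nat.prime_iff_prime_int.mp hp), add_comm] at h
    rw [← Int.natCast_emultiplicity]
    push_cast
    exact ENat.add_right_injective_of_ne_top (finiteMultiplicity_iff_emultiplicity_ne_top.mp hfin) h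
  rw [pow_dvd_iff_le_emultiplicity, hgeom, pow_dvd_iff_le_emultiplicity]

/-- The geometric sum `1 + u + ⋯ + u ^ (y - 1)` in `ZMod N`, where `y : ZMod N` is represented by an
element of `{0, …, N - 1}`. -/
def zmodGeomSum (u y : ZMod N) : ZMod N :=
  ∑ i ∈ Finset.range y.val, u ^ i

section Crossed

variable {u : ZMod N}

theorem zmodGeomSum_natCast (hu : u ^ N = 1) (hsum : ∑ i ∈ Finset.range N, u ^ i = 0) (m : ℕ) :
    zmodGeomSum u m = ∑ i ∈ Finset.range m, u ^ i := by
  have hperiodic : Function.Periodic (fun m => ∑ i ∈ Finset.range m, u ^ i) N := fun m => by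
    simp only [add_comm m, Finset.sum_range_add, hsum, pow_add, hu, one_mul, zero_add]
  rw [zmodGeomSum, ZMod.val_natCast]
  exact hperiodic.map_mod_nat m

variable [NeZero N]

theorem zmodGeomSum_add (hu : u ^ N = 1) (hsum : ∑ i ∈ Finset.range N, u ^ i = 0) (y z : ZMod N) :
    zmodGeomSum u (y + z) = zmodGeomSum u y + u ^ y.val * zmodGeomSum u z := by
  calc zmodGeomSum u (y + z) = zmodGeomSum u ((y.val + z.val : ℕ) : ZMod N) := by simp
    _ = zmodGeomSum u y + u ^ y.val * zmodGeomSum u z := by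
      rw [zmodGeomSum_natCast hu hsum, Finset.sum_range_add]
      simp only [zmodGeomSum, Finset.mul_sum, pow_add]

theorem zmodGeomSum_injective (hu : u ^ N = 1) (hzero : ∀ y, zmodGeomSum u y = 0 → y = 0)
    (hsum : ∑ i ∈ Finset.range N, u ^ i = 0) : Function.Injective (zmodGeomSum u) := by
  intro y z hyz
  have hadd := zmodGeomSum_add hu hsum y (z - y)
  rw [add_sub_cancel, hyz, left_eq_add] at hadd
  have hunit : IsUnit (u ^ y.val) := (IsUnit.of_pow_eq_one hu (NeZero.ne N)).pow _
  exact (sub_eq_zero.mp (hzero _ (hunit.mul_right_eq_zero.mp hadd))).symm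

end Crossed

theorem natCast_geom_sum_eq_zero_iff (hp : p.Prime) (hs : s ≡ 1 [MOD p])
    (hs4 : p = 2 → s ≡ 1 [MOD 4]) (m : ℕ) :
    ∑ i ∈ Finset.range m, (s : ZMod (p ^ n)) ^ i = 0 ↔ p ^ n ∣ m := by
  rw [← pow_dvd_geom_sum_iff hp hs hs4, ← ZMod.natCast_eq_zero_iff]
  push_cast
  rfl

theorem eq_zero_of_zmodGeomSum_eq_zero (hp : p.Prime) (hs : s ≡ 1 [MOD p])
    (hs4 : p = 2 → s ≡ 1 [MOD 4]) {y : ZMod (p ^ n)}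
    (hy : zmodGeomSum (s : ZMod (p ^ n)) y = 0) : y = 0 := by
  have : NeZero (p ^ n) := ⟨pow_ne_zero n hp.ne_zero⟩
  rw [zmodGeomSum, natCast_geom_sum_eq_zero_iff hp hs hs4, ← ZMod.natCast_eq_zero_iff] at hy
  rwa [ZMod.natCast_zmod_val] at hy

end GeomSum

section Transfer

theorem exists_isRegularPDS_cyclicSemidirect_of_bijective {N s v k l μ : ℕ} [NeZero N]
    {u : (ZMod N)ˣ} {hu : u ^ N = 1} {D : Set (Multiplicative (ZMod N × ZMod N))}
    (hD : IsRegularPDS D v k l μ) (hus : (u : ZMod N) = s) (hmult : ∀ x, x ^ s ∈ D ↔ x ∈ D)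
    (hsum : ∑ i ∈ Finset.range N, (u : ZMod N) ^ i = 0)
    (hbij : Function.Bijective (zmodGeomSum (u : ZMod N))) :
    ∃ D' : Set (CyclicSemidirect u hu), IsRegularPDS D' v k l μ := by
  have hu_val : (u : ZMod N) ^ N = 1 := by rw [← Units.val_pow_eq_pow_val, hu, Units.val_one]
  have hmult_pow (m : ℕ) (x) : x ^ s ^ m ∈ D ↔ x ∈ D := by
    induction m with
    | zero => rw [pow_zero, pow_one]
    | succ m ih => rw [pow_succ, pow_mul, hmult, ih]
  let θ : CyclicSemidirect u hu ≃ Multiplicative (ZMod N × ZMod N) :=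
    SemidirectProduct.equivProd.trans <|
      (Multiplicative.toAdd.prodCongr (Multiplicative.toAdd.trans (Equiv.ofBijective _ hbij))).trans
        Multiplicative.ofAdd
  refine ⟨_, hD.preimage_crossedHom θ (fun g => powMonoidHom (s ^ g.right.toAdd.val))
    (fun g => hmult_pow g.right.toAdd.val) fun g h =>
      Multiplicative.toAdd.injective (Prod.ext ?_ ?_)⟩
  · simp [θ, hus, cyclicTwist_apply]
  · simpa [θ, hus] using zmodGeomSum_add hu_val hsum g.right.toAdd h.right.toAdd

theorem exists_isRegularPDS_cyclicSemidirect_of_modEq_one {p n s v k l μ : ℕ} [NeZero (p ^ n)]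
    {u : (ZMod (p ^ n))ˣ} {hu : u ^ p ^ n = 1}
    {D : Set (Multiplicative (ZMod (p ^ n) × ZMod (p ^ n)))} (hD : IsRegularPDS D v k l μ)
    (hp : p.Prime) (hn : n ≠ 0) (hus : (u : ZMod (p ^ n)) = s) (hs : s ≡ 1 [MOD p])
    (hs4 : p = 2 → s ≡ 1 [MOD 4]) :
    ∃ D' : Set (CyclicSemidirect u hu), IsRegularPDS D' v k l μ := by
  have hcard : Nat.card (Multiplicative (ZMod (p ^ n) × ZMod (p ^ n))) = p ^ (n + n) := by
    rw [Nat.card_congr Multiplicative.toAdd, Nat.card_prod, Nat.card_zmod, pow_add]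
  have hsum : ∑ i ∈ Finset.range (p ^ n), (u : ZMod (p ^ n)) ^ i = 0 := by
    rw [hus, natCast_geom_sum_eq_zero_iff hp hs hs4]
  have hinj : Function.Injective (zmodGeomSum (u : ZMod (p ^ n))) :=
    zmodGeomSum_injective (by rw [← Units.val_pow_eq_pow_val, hu, Units.val_one])
      (fun _ hy => eq_zero_of_zmodGeomSum_eq_zero hp hs hs4 (hus ▸ hy)) hsum
  exact exists_isRegularPDS_cyclicSemidirect_of_bijective hD hus
    (hD.pow_mem_iff_of_card_eq_prime_pow hp (by lia) hcard hs) hsum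
    (Finite.injective_iff_bijective.mp hinj)

end Transfer

section OrderFour

/-- The group `C₄ ⋊₋₁ C₄`. Since `1 + (-1) = 0`, the map `zmodGeomSum (-1)` is not injective, so
this group needs explicit partial difference sets. -/
abbrev CyclicSemidirectFour : Type :=
  CyclicSemidirect (-1 : (ZMod 4)ˣ) ((by decide : Even 4).neg_one_pow)

instance : Fintype CyclicSemidirectFour :=
  Fintype.ofEquiv _ SemidirectProduct.equivProd.symm

/-- A regular partial difference set of size `k ≤ 7` in `C₄ ⋊₋₁ C₄` for each such size occurring in
`pdsParametersSixteen`, and `∅` for the other `k`. -/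
def smallPDSFour (k : ℕ) : Finset CyclicSemidirectFour :=
  let coordinates : Finset (ZMod 4 × ZMod 4) := match k with
    | 1 => {(2, 0)}
    | 3 => {q | q.2 = 0 ∧ q ≠ 0}
    | 5 => {(1, 0), (3, 0), (0, 1), (0, 3), (2, 2)}
    | 6 => {q | (q.1 = 0 ∨ q.2 = 0) ∧ q ≠ 0}
    | 7 => {q | (q.2 = 0 ∨ q.2 = 2) ∧ q ≠ 0}
    | _ => ∅
  {g | (g.left.toAdd, g.right.toAdd) ∈ coordinates}

/-- A regular partial difference set of size `k` in `C₄ ⋊₋₁ C₄` for each size `k` occurring in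
`pdsParametersSixteen`. Those with more than `7` elements are complements, outside the identity, of
the small ones. -/
def pdsFour (k : ℕ) : Finset CyclicSemidirectFour :=
  if k ≤ 7 then smallPDSFour k else (insert 1 (smallPDSFour (15 - k)))ᶜ

theorem card_cyclicSemidirectFour : Nat.card CyclicSemidirectFour = 16 := by
  rw [SemidirectProduct.card, Nat.card_congr Multiplicative.toAdd, Nat.card_zmod]

theorem isRegularPDS_pdsFour {k l μ : ℕ} (h : (k, l, μ) ∈ pdsParametersSixteen) :
    IsRegularPDS (pdsFour k : Set CyclicSemidirectFour) 16 k l μ := by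
  suffices ∀ q ∈ pdsParametersSixteen,
      IsRegularPDS (pdsFour q.1 : Set CyclicSemidirectFour) 16 q.1 q.2.1 q.2.2 from this _ h
  simp only [pdsParametersSixteen, List.forall_mem_cons, List.not_mem_nil, false_imp_iff,
    implies_true, and_true]
  refine ⟨?_, ?_, ?_, ?_, ?_, ?_, ?_, ?_, ?_, ?_⟩ <;>
    exact isRegularPDS_coe_finset card_cyclicSemidirectFour (by decide +kernel) (by decide +kernel)
      (by decide +kernel) (by decide +kernel) (by decide +kernel)

theorem exists_isRegularPDS_cyclicSemidirectFour {G : Type*} [CommGroup G] [Finite G] {D : Set G}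
    {k l μ : ℕ} (hD : IsRegularPDS D 16 k l μ) :
    ∃ D' : Set CyclicSemidirectFour, IsRegularPDS D' 16 k l μ := by
  obtain ⟨rfl, rfl⟩ | ⟨rfl, rfl⟩ | hparam := hD.mem_pdsParametersSixteen
  · exact ⟨_, card_cyclicSemidirectFour ▸ isRegularPDS_empty CyclicSemidirectFour l⟩
  · have h := isRegularPDS_compl_one CyclicSemidirectFour μ
    rw [card_cyclicSemidirectFour] at h
    exact ⟨_, h⟩
  · exact ⟨_, isRegularPDS_pdsFour hparam⟩

end OrderFour

theorem exists_isRegularPDS_cyclicSemidirect {p n v k l μ : ℕ} [NeZero (p ^ n)]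
    {u : (ZMod (p ^ n))ˣ} {hu : u ^ p ^ n = 1}
    {D : Set (Multiplicative (ZMod (p ^ n) × ZMod (p ^ n)))} (hD : IsRegularPDS D v k l μ)
    (hp : p.Prime) (hn : 2 ≤ n) (hus : (u : ZMod (p ^ n)) = (p ^ (n - 1) + 1 : ℕ)) :
    ∃ D' : Set (CyclicSemidirect u hu), IsRegularPDS D' v k l μ := by
  have modEq_one {m : ℕ} (hm : m ∣ p ^ (n - 1)) : p ^ (n - 1) + 1 ≡ 1 [MOD m] := by
    simpa using (Nat.modEq_zero_iff_dvd.mpr hm).add_right 1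
  by_cases hfour : p = 2 ∧ n = 2
  · obtain ⟨rfl, rfl⟩ := hfour
    obtain rfl : u = -1 := Units.ext (hus.trans (by decide))
    obtain rfl : 16 = v := by simpa using hD.isPDS.1
    exact exists_isRegularPDS_cyclicSemidirectFour hD
  · refine exists_isRegularPDS_cyclicSemidirect_of_modEq_one hD hp (by lia) hus
      (modEq_one (dvd_pow_self p (by lia))) fun hp2 => modEq_one ?_
    rw [hp2]
    exact pow_dvd_pow 2 (by lia : 2 ≤ n - 1)

/-- If `C_{p^n} × C_{p^n}` contains a regular PDS, then the nonabelian group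
`C_{p^n} ⋊_{p^(n-1)+1} C_{p^n}` (characterized by its presentation) contains a regular PDS
with the same parameters. -/
theorem regular_pds_transfer_semidirect (p n : ℕ) (hp : p.Prime) (hn : 2 ≤ n)
    (D : Set (Multiplicative (ZMod (p ^ n) × ZMod (p ^ n)))) (v k l μ : ℕ)
    (hD : IsPDS D v k l μ) (h1 : (1 : Multiplicative (ZMod (p ^ n) × ZMod (p ^ n))) ∉ D)
    (hrev : D⁻¹ = D) :
    ∀ (H : Type*) [Group H] (a b : H),
      orderOf a = p ^ n → orderOf b = p ^ n →
      Subgroup.closure {a, b} = ⊤ →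
      Subgroup.zpowers a ⊓ Subgroup.zpowers b = ⊥ →
      b⁻¹ * a * b = a ^ (p ^ (n - 1) + 1) →
      ∃ D' : Set H, IsPDS D' v k l μ ∧ (1 : H) ∉ D' ∧ D'⁻¹ = D' := by
  intro H _ a b ha hb hgen hdisj hconj
  have : NeZero (p ^ n) := ⟨pow_ne_zero n hp.ne_zero⟩
  have hsemiconj : SemiconjBy b⁻¹ a (a ^ (p ^ (n - 1) + 1)) := by
    rw [SemiconjBy, ← hconj, mul_inv_cancel_right]
  have hcompl : IsCompl (Subgroup.zpowers a) (Subgroup.zpowers b⁻¹) := by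
    rw [Subgroup.zpowers_inv]
    refine IsCompl.of_eq hdisj ?_
    rw [← hgen, Set.insert_eq, Subgroup.closure_union, ← Subgroup.zpowers_eq_closure,
      ← Subgroup.zpowers_eq_closure]
  have hunit : ((p ^ (n - 1) + 1 : ℕ) : ZMod (p ^ n)) ^ p ^ n = 1 :=
    natCast_pow_eq_one_of_semiconjBy ha (by rw [inv_pow, ← hb, pow_orderOf_eq_one, inv_one])
      hsemiconj
  let u := Units.ofPowEqOne _ _ hunit (NeZero.ne _)
  have hu : u ^ p ^ n = 1 := Units.pow_ofPowEqOne hunit _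
  obtain ⟨e⟩ := nonempty_mulEquiv_cyclicSemidirect ha ((orderOf_inv b).trans hb) hcompl hsemiconj
    (u := u) rfl hu
  obtain ⟨D', hD'⟩ := exists_isRegularPDS_cyclicSemidirect (hu := hu) ⟨hD, h1, hrev⟩ hp hn rfl
  obtain ⟨hpds, hone, hinv⟩ := hD'.preimage_mulEquiv e
  exact ⟨_, hpds, hone, hinv⟩
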